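/- Any LD limit point ρ of the invariant measures P^n is determined on S by its values on A: ρ(x) = sup_{a∈A} ρ(a) · Π(a,x) for every x ∈ S, and ρ(A) = sup_{a∈A} ρ(a) = 1. -/

import Mathlib

open Filter Topology Metric Set MeasureTheory
open scoped NNReal

noncomputable section

/-- A deviability density on a topological space `E`. -/
def IsDeviabilityDensity {E : Type*} [TopologicalSpace E] (p : E → ℝ) : Prop :=
  (∀ x, p x ∈ Set.Icc (0:ℝ) 1) ∧ (⨆ x, p x) = 1 ∧
    ∀ γ ∈ Set.Ioc (0:ℝ) 1, IsCompact {x | γ ≤ p x}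

variable {S : Type*} [MetricSpace S]

/-- Time shift `θ_s` on continuous paths. -/
def pshift (s : ℝ≥0) (X : C(ℝ≥0, S)) : C(ℝ≥0, S) :=
  ⟨fun t => X (s + t), X.continuous.comp (continuous_const.add continuous_id)⟩

/-- `Π_{x,t}(y)`. -/
def transDen (Px : S → C(ℝ≥0, S) → ℝ) (x : S) (t : ℝ≥0) (y : S) : ℝ :=
  ⨆ X ∈ {X : C(ℝ≥0, S) | X t = y}, Px x X

/-- The standing assumptions (2.2)--(2.5) of the paper, together with the basic
assumptions on the family of path deviability densities `Px` and the set `A`. -/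
structure DevSetup (S : Type*) [MetricSpace S] (Px : S → C(ℝ≥0, S) → ℝ) (A : Set S) :
    Prop where
  dev : ∀ x, IsDeviabilityDensity (Px x)
  start : ∀ x (X : C(ℝ≥0, S)), X 0 ≠ x → Px x X = 0
  /-- (2.2) upper semicontinuity -/
  usc : UpperSemicontinuous (fun q : S × C(ℝ≥0, S) => Px q.1 q.2)
  /-- (2.2) uniform upper compactness -/
  cpt : ∀ K : Set S, IsCompact K → ∀ γ ∈ Set.Ioc (0:ℝ) 1,
    IsCompact (⋃ x ∈ K, {X : C(ℝ≥0, S) | γ ≤ Px x X})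
  /-- (2.3) the maxitive Markov property -/
  markov : ∀ x (X : C(ℝ≥0, S)) (s : ℝ≥0),
    Px x X = (⨆ X' ∈ {X' : C(ℝ≥0, S) | ∀ u ≤ s, X' u = X u}, Px x X') *
      Px (X s) (pshift s X)
  /-- (2.4) `A` is locally finite -/
  locFin : ∀ K : Set S, IsCompact K → (K ∩ A).Finite
  /-- (2.4)(i) -/
  attract : ∀ x (X : C(ℝ≥0, S)), Px x X = 1 → (⨅ t : ℝ≥0, infDist (X t) A) = 0
  /-- (2.4)(ii) -/
  equil : ∀ a ∈ A, Px a (ContinuousMap.const ℝ≥0 a) = 1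
  /-- (2.4)(iii) -/
  connect : ∀ a ∈ A, ∀ a' ∈ A, ∃ t : ℝ≥0, 0 < t ∧ 0 < transDen Px a t a'
  /-- (2.4)(iv) -/
  nearA : ∀ ε : ℝ, 0 < ε → ∃ δ : ℝ, 0 < δ ∧ ∀ x : S, infDist x A < δ →
    ∃ s₀ s₁ : ℝ≥0, 0 < s₀ ∧ 0 < s₁ ∧ ∃ a ∈ A,
      1 - ε < transDen Px x s₀ a ∧ 1 - ε < transDen Px a s₁ x
  /-- (2.4)(v) -/
  localMove : ∀ x : S, ∀ ε : ℝ, 0 < ε → ∃ δ : ℝ, 0 < δ ∧ ∃ t₀ t₁ : ℝ≥0,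
    ∀ x' : S, dist x x' < δ →
      1 - ε < transDen Px x t₀ x' ∧ 1 - ε < transDen Px x' t₁ x
  /-- (2.5) uniform tightness -/
  tight : ∀ K₁ : Set S, IsCompact K₁ → ∀ ε : ℝ, 0 < ε → ∃ K₂ : Set S, IsCompact K₂ ∧
    Filter.limsup (fun t : ℝ≥0 => ⨆ x ∈ K₁, ⨆ y ∈ K₂ᶜ, transDen Px x t y) atTop < ε

/-- LD convergence at the given rate of a sequence of Borel probability measures to a
deviability density. -/
def LDConv {E : Type*} [TopologicalSpace E] [MeasurableSpace E]
    (Q : ℕ → Measure E) (rate : ℕ → ℕ) (p : E → ℝ) : Prop :=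
  ∀ f : E → ℝ, Continuous f → (∀ x, 0 ≤ f x) → BddAbove (Set.range f) →
    Tendsto (fun n => (∫ x, (f x) ^ (rate n) ∂(Q n)) ^ ((rate n : ℝ)⁻¹)) atTop
      (𝓝 (⨆ x, f x * p x))

variable [MeasurableSpace S] [BorelSpace S]

/-- The max flux `Φ_ρ(Γ,Γ')` relative to the limiting transition density `PL`. -/
def maxFlux (PL : S → S → ℝ) (ρ : S → ℝ) (Γ Γ' : Set S) : ℝ :=
  ⨆ x ∈ Γ, ρ x * ⨆ y ∈ Γ', PL x y

/-- `Φ_ρ(Γ, x)`, the max flux into a point. -/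
def maxFluxPt (PL : S → S → ℝ) (ρ : S → ℝ) (Γ : Set S) (x : S) : ℝ :=
  ⨆ a ∈ Γ, ρ a * PL a x

/-!
Write `Π_x` for `Px x` and `Π_t` for `transDen Px · t ·`. Invariance of `Pⁿ` says that the power
mean `(∫ fⁿ dPⁿ)^(1/n)` does not change when `f` is replaced by `x ↦ (∫ fⁿ dκⁿ_t(x, ·))^(1/n)`.
These functions converge locally uniformly, so by Varadhan's lemma the limit `ρ` is the time `t`
marginal of the path density `X ↦ ρ (X 0) * Π_{X 0}(X)`, for every `t`. In particular
`ρ x * Π_t(x, y) ≤ ρ y`.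

Let `0 < c < ρ y`. For every `t` there is a path of density above `c` that is in `y` at time `t`,
and until then it stays in the compact set `{c ≤ ρ}`. Paths of full density approach `A`, so by
compactness staying away from `A` for some time `T` costs a factor bounded away from `1`. A long
enough path of density above `c` therefore comes close to some `a ∈ A`, and a detour through `a`
costs a factor arbitrarily close to `1`. Discarding everything before the detour leaves a flux
`ρ a * Π_t(a, y)` that is almost `c`.
-/

section BoundedSuprema

variable {E : Type*} {F : E → ℝ} {s : Set E} {c : ℝ}

theorem biSup_le_of_nonneg (hc : 0 ≤ c) (h : ∀ x ∈ s, F x ≤ c) : ⨆ x ∈ s, F x ≤ c :=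
  Real.iSup_le (fun x => Real.iSup_le (h x) hc) hc

theorem biSup_nonneg (h : ∀ x ∈ s, 0 ≤ F x) : 0 ≤ ⨆ x ∈ s, F x :=
  Real.iSup_nonneg fun x => Real.iSup_nonneg (h x)

theorem le_biSup_of_forall_le (h : ∀ x ∈ s, F x ≤ c) {x : E} (hx : x ∈ s) :
    F x ≤ ⨆ x ∈ s, F x := by
  have bdd : BddAbove (range fun x => ⨆ _ : x ∈ s, F x) :=
    ⟨max c 0, forall_mem_range.2 fun y =>
      Real.iSup_le (fun hy => (h y hy).trans (le_max_left c 0)) (le_max_right c 0)⟩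
  simpa only [ciSup_pos hx] using le_ciSup bdd x

theorem exists_mem_lt_of_lt_biSup (hc : 0 ≤ c) (h : c < ⨆ x ∈ s, F x) : ∃ x ∈ s, c < F x := by
  by_contra! hF
  exact h.not_ge (biSup_le_of_nonneg hc hF)

theorem mul_biSup_le_of_nonneg {r : ℝ} (hr : 0 ≤ r) (hc : 0 ≤ c) (h : ∀ x ∈ s, r * F x ≤ c) :
    r * ⨆ x ∈ s, F x ≤ c := by
  simp only [Real.mul_iSup_of_nonneg hr]
  exact biSup_le_of_nonneg hc h

end BoundedSuprema

theorem upperSemicontinuous_mul_of_nonneg {X : Type*} [TopologicalSpace X] {f g : X → ℝ}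
    (hf : UpperSemicontinuous f) (hg : UpperSemicontinuous g) (hf0 : ∀ x, 0 ≤ f x)
    (hg0 : ∀ x, 0 ≤ g x) : UpperSemicontinuous fun x => f x * g x := by
  intro x c hc
  have near : ∀ᶠ q : ℝ × ℝ in 𝓝 (f x, g x), q.1 * q.2 < c :=
    (continuous_mul.tendsto (f x, g x)).eventually_lt_const hc
  rw [nhds_prod_eq] at near
  obtain ⟨⟨a, b⟩, hab, ha, hb⟩ := ((near.filter_mono (prod_mono (nhdsWithin_le_nhds
    (s := Ioi (f x))) (nhdsWithin_le_nhds (s := Ioi (g x))))).and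
      (prod_mem_prod self_mem_nhdsWithin self_mem_nhdsWithin)).exists
  filter_upwards [hf x a ha, hg x b hb] with y hya hyb
  exact (mul_lt_mul'' hya hyb (hf0 y) (hg0 y)).trans hab

section Subdeviability

/-- A deviability density without the normalisation `sup p = 1`, as needed for the products of
densities that describe paths with a random starting point. -/
structure IsSubdeviability {E : Type*} [TopologicalSpace E] (p : E → ℝ) : Prop where
  mem_Icc : ∀ x, p x ∈ Icc (0 : ℝ) 1
  isCompact : ∀ γ ∈ Ioc (0 : ℝ) 1, IsCompact {x | γ ≤ p x}

variable {E Z : Type*} [TopologicalSpace E]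

theorem IsDeviabilityDensity.isSubdeviability {p : E → ℝ} (hp : IsDeviabilityDensity p) :
    IsSubdeviability p :=
  ⟨hp.1, hp.2.2⟩

theorem IsSubdeviability.isClosed_setOf_le [T2Space E] {p : E → ℝ} (hp : IsSubdeviability p)
    {γ : ℝ} (hγ : 0 < γ) : IsClosed {x | γ ≤ p x} := by
  rcases le_or_gt γ 1 with h1 | h1
  · exact (hp.isCompact γ ⟨hγ, h1⟩).isClosed
  · simp only [((hp.mem_Icc _).2.trans_lt h1).not_ge, ofPred_false, isClosed_empty]

theorem IsSubdeviability.upperSemicontinuous [T2Space E] {p : E → ℝ} (hp : IsSubdeviability p) :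
    UpperSemicontinuous p := by
  intro x γ hγ
  have := (hp.isClosed_setOf_le ((hp.mem_Icc x).1.trans_lt hγ)).isOpen_compl.mem_nhds
    (not_le.2 hγ)
  filter_upwards [this] with y hy using not_le.1 hy

theorem bddAbove_range_mul_of_mem_Icc {f p : Z → ℝ} (hf : ∀ x, f x ∈ Icc (0 : ℝ) 1)
    (hp : ∀ x, p x ∈ Icc (0 : ℝ) 1) : BddAbove (range fun x => f x * p x) :=
  ⟨1, forall_mem_range.2 fun x => mul_le_one₀ (hf x).2 (hp x).1 (hp x).2⟩

theorem exists_bump [CompletelyRegularSpace E] {y : E} {s : Set E} (hs : IsClosed s)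
    (hy : y ∉ s) :
    ∃ f : C(E, ℝ), f y = 1 ∧ (∀ x ∈ s, f x = 0) ∧ ∀ x, f x ∈ Icc (0 : ℝ) 1 := by
  obtain ⟨f, hf, hfy, hfs⟩ := CompletelyRegularSpace.completely_regular y s hs hy
  refine ⟨⟨fun x => 1 - f x, by fun_prop⟩, by simp [hfy], fun x hx => by simp [hfs hx],
    fun x => ⟨sub_nonneg.2 (f x).2.2, sub_le_self 1 (f x).2.1⟩⟩

variable [T35Space E] {ρ : E → ℝ} {e : Z → E} {p : Z → ℝ}

theorem IsSubdeviability.le_of_iSup_mul_le (hρ : IsSubdeviability ρ)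
    (hp : ∀ z, p z ∈ Icc (0 : ℝ) 1)
    (h : ∀ f : C(E, ℝ), (∀ y, f y ∈ Icc (0 : ℝ) 1) → ⨆ z, f (e z) * p z ≤ ⨆ y, f y * ρ y)
    (z : Z) : p z ≤ ρ (e z) := by
  refine le_of_forall_gt_imp_ge_of_dense fun c hc => ?_
  have c_pos : 0 < c := (hρ.mem_Icc _).1.trans_lt hc
  obtain ⟨f, hfz, hf0, hf⟩ := exists_bump (hρ.isClosed_setOf_le c_pos) (not_le.2 hc)
  calc p z = f (e z) * p z := by rw [hfz, one_mul]
    _ ≤ ⨆ z, f (e z) * p z := le_ciSup (bddAbove_range_mul_of_mem_Icc (fun z => hf (e z)) hp) z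
    _ ≤ ⨆ y, f y * ρ y := h f hf
    _ ≤ c := Real.iSup_le (fun y => ?_) c_pos.le
  rcases le_or_gt c (ρ y) with hy | hy
  · simpa only [hf0 y hy, zero_mul] using c_pos.le
  · exact (mul_le_of_le_one_left (hρ.mem_Icc y).1 (hf y).2).trans hy.le

theorem IsSubdeviability.exists_le_of_iSup_mul_le [TopologicalSpace Z] (hp : IsSubdeviability p)
    (hρ : ∀ y, ρ y ∈ Icc (0 : ℝ) 1) (he : Continuous e)
    (h : ∀ f : C(E, ℝ), (∀ y, f y ∈ Icc (0 : ℝ) 1) → ⨆ y, f y * ρ y ≤ ⨆ z, f (e z) * p z)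
    {y : E} {c : ℝ} (c_pos : 0 < c) (hc : c < ρ y) : ∃ z, e z = y ∧ c ≤ p z := by
  by_contra! hz
  have closed : IsClosed (e '' {z | c ≤ p z}) :=
    ((hp.isCompact c ⟨c_pos, hc.le.trans (hρ y).2⟩).image he).isClosed
  obtain ⟨f, hfy, hf0, hf⟩ := exists_bump closed (y := y)
    (by rintro ⟨z, hcz, hzy⟩; exact (hz z hzy).not_ge hcz)
  refine hc.not_ge ?_
  calc ρ y = f y * ρ y := by rw [hfy, one_mul]
    _ ≤ ⨆ y, f y * ρ y := le_ciSup (bddAbove_range_mul_of_mem_Icc hf hρ) y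
    _ ≤ ⨆ z, f (e z) * p z := h f hf
    _ ≤ c := Real.iSup_le (fun z => ?_) c_pos.le
  rcases le_or_gt c (p z) with hcz | hcz
  · simpa only [hf0 _ (mem_image_of_mem e hcz), zero_mul] using c_pos.le
  · exact (mul_le_of_le_one_left (hp.mem_Icc z).1 (hf _).2).trans hcz.le

/-- The contraction principle, read backwards. -/
theorem IsSubdeviability.isLUB_image_preimage [TopologicalSpace Z] (hρ : IsSubdeviability ρ)
    (hp : IsSubdeviability p) (he : Continuous e) (he' : Function.Surjective e)
    (h : ∀ f : C(E, ℝ), (∀ y, f y ∈ Icc (0 : ℝ) 1) → ⨆ y, f y * ρ y = ⨆ z, f (e z) * p z)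
    (y : E) : IsLUB (p '' (e ⁻¹' {y})) (ρ y) := by
  constructor
  · rintro _ ⟨z, rfl, rfl⟩
    exact hρ.le_of_iSup_mul_le hp.mem_Icc (fun f hf => (h f hf).ge) z
  · intro b hb
    obtain ⟨z₀, hz₀⟩ := he' y
    have hb0 : 0 ≤ b := (hp.mem_Icc z₀).1.trans (hb ⟨z₀, hz₀, rfl⟩)
    refine le_of_forall_lt_imp_le_of_dense fun c hc => ?_
    rcases le_or_gt c 0 with h0 | h0
    · exact h0.trans hb0
    · obtain ⟨z, hzy, hcz⟩ :=
        hp.exists_le_of_iSup_mul_le hρ.mem_Icc he (fun f hf => (h f hf).le) h0 hc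
      exact hcz.trans (hb ⟨z, hzy, rfl⟩)

end Subdeviability

section ContinuousConvergence

variable {X Y : Type*} [TopologicalSpace X] [FirstCountableTopology X]

theorem tendsto_uncurry_of_forall_seq {g : ℕ → X → Y} {x : X} {l : Filter Y}
    (h : ∀ xs : ℕ → X, Tendsto xs atTop (𝓝 x) → Tendsto (fun n => g n (xs n)) atTop l) :
    Tendsto (fun q : ℕ × X => g q.1 q.2) (atTop ×ˢ 𝓝 x) l := by
  refine tendsto_of_subseq_tendsto fun ns hns => ?_
  obtain ⟨φ, hφ, hψ⟩ := strictMono_subseq_of_tendsto_atTop (tendsto_fst.comp hns)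
  set ψ : ℕ → ℕ := fun k => (ns (φ k)).1
  let xs : ℕ → X := Function.extend ψ (fun k => (ns (φ k)).2) fun _ => x
  have xs_tendsto : Tendsto xs atTop (𝓝 x) := by
    refine tendsto_atTop'.2 fun U hU => ?_
    obtain ⟨K, hK⟩ := tendsto_atTop'.1 ((tendsto_snd.comp hns).comp hφ.tendsto_atTop) U hU
    refine ⟨ψ K, fun n hn => ?_⟩
    by_cases hk : ∃ k, ψ k = n
    · obtain ⟨k, rfl⟩ := hk
      rw [show xs (ψ k) = (ns (φ k)).2 from hψ.injective.extend_apply _ _ k]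
      exact hK k (hψ.le_iff_le.1 hn)
    · rw [show xs n = x from Function.extend_apply' _ _ _ hk]
      exact mem_of_mem_nhds hU
  refine ⟨φ, ((h xs xs_tendsto).comp hψ.tendsto_atTop).congr fun k => ?_⟩
  exact congrArg (g (ψ k)) (hψ.injective.extend_apply _ _ k)

theorem continuous_of_forall_seq_tendsto [TopologicalSpace Y] [RegularSpace Y] {g : ℕ → X → Y}
    {G : X → Y} (h : ∀ x (xs : ℕ → X), Tendsto xs atTop (𝓝 x) →
      Tendsto (fun n => g n (xs n)) atTop (𝓝 (G x))) : Continuous G := by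
  refine continuous_iff_continuousAt.2 fun x => (closed_nhds_basis (G x)).tendsto_right_iff.2 ?_
  rintro V ⟨hV, V_closed⟩
  obtain ⟨p, hp, q, hq, hpq⟩ :=
    eventually_prod_iff.1 ((tendsto_uncurry_of_forall_seq (h x)).eventually_mem hV)
  filter_upwards [hq] with y hy
  exact V_closed.mem_of_tendsto (h y (fun _ => y) tendsto_const_nhds)
    (hp.mono fun n hn => hpq hn hy)

theorem tendstoLocallyUniformly_of_forall_seq_tendsto [UniformSpace Y] {g : ℕ → X → Y}
    {G : X → Y} (h : ∀ x (xs : ℕ → X), Tendsto xs atTop (𝓝 x) →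
      Tendsto (fun n => g n (xs n)) atTop (𝓝 (G x))) : TendstoLocallyUniformly g G atTop := by
  refine tendstoLocallyUniformly_iff_forall_tendsto.2 fun x => ?_
  have G_tendsto : Tendsto (fun q : ℕ × X => G q.2) (atTop ×ˢ 𝓝 x) (𝓝 (G x)) :=
    ((continuous_of_forall_seq_tendsto h).tendsto x).comp tendsto_snd
  exact (G_tendsto.prodMk_nhds (tendsto_uncurry_of_forall_seq (h x))).mono_right
    (nhds_le_uniformity (G x))

end ContinuousConvergence

section PowerMeans

open ProbabilityTheory

variable {E : Type*} [MeasurableSpace E] {μ : Measure E} {f g : E → ℝ} {n : ℕ}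

/-- The `n`-th power mean `(∫ fⁿ dμ)^(1/n)`, the functional whose limit defines LD convergence.
Its value is `1` for `n = 0`. -/
def powMean (μ : Measure E) (n : ℕ) (f : E → ℝ) : ℝ :=
  (∫ x, f x ^ n ∂μ) ^ ((n : ℝ)⁻¹)

theorem powMean_mono (hf : ∀ x, 0 ≤ f x) (hfg : ∀ x, f x ≤ g x)
    (hg : Integrable (fun x => g x ^ n) μ) : powMean μ n f ≤ powMean μ n g :=
  Real.rpow_le_rpow (integral_nonneg fun x => pow_nonneg (hf x) n)
    (integral_mono_of_nonneg (ae_of_all μ fun x => pow_nonneg (hf x) n) hg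
      (ae_of_all μ fun x => pow_le_pow_left₀ (hf x) (hfg x) n)) (by positivity)

theorem powMean_mem_Icc [IsProbabilityMeasure μ] (hf : ∀ x, f x ∈ Icc (0 : ℝ) 1) :
    powMean μ n f ∈ Icc (0 : ℝ) 1 := by
  have nonneg : 0 ≤ ∫ x, f x ^ n ∂μ := integral_nonneg fun x => pow_nonneg (hf x).1 n
  have le_one : ∫ x, f x ^ n ∂μ ≤ ∫ _, (1 : ℝ) ∂μ :=
    integral_mono_of_nonneg (ae_of_all μ fun x => pow_nonneg (hf x).1 n) (integrable_const 1)
      (ae_of_all μ fun x => pow_le_one₀ (hf x).1 (hf x).2)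
  rw [integral_const, probReal_univ, one_smul] at le_one
  exact ⟨Real.rpow_nonneg nonneg _, Real.rpow_le_one nonneg le_one (by positivity)⟩

theorem powMean_pow (hf : ∀ x, 0 ≤ f x) (hn : n ≠ 0) :
    powMean μ n f ^ n = ∫ x, f x ^ n ∂μ :=
  Real.rpow_inv_natCast_pow (integral_nonneg fun x => pow_nonneg (hf x) n) hn

theorem integrable_pow_of_mem_Icc [IsFiniteMeasure μ] (hf : Measurable f) {C : ℝ}
    (hfC : ∀ x, f x ∈ Icc 0 C) : Integrable (fun x => f x ^ n) μ := by
  refine Integrable.of_bound (hf.pow_const n).aestronglyMeasurable (C ^ n) (ae_of_all μ ?_)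
  intro x
  rw [Real.norm_of_nonneg (pow_nonneg (hfC x).1 n)]
  exact pow_le_pow_left₀ (hfC x).1 (hfC x).2 n

theorem measurable_powMean_kernel {F : Type*} [MeasurableSpace F] {κ : Kernel F E}
    [IsSFiniteKernel κ] (hf : Measurable f) : Measurable fun x => powMean (κ x) n f :=
  ((hf.pow_const n).stronglyMeasurable.integral_kernel (κ := κ)).measurable.pow_const _

theorem invariant_of_forall_eq_lintegral {κ : Kernel E E}
    (h : ∀ s, MeasurableSet s → μ s = ∫⁻ x, κ x s ∂μ) : κ.Invariant μ :=
  Measure.ext fun s hs => (Measure.bind_apply hs κ.aemeasurable).trans (h s hs).symm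

theorem integral_of_invariant {κ : Kernel E E} (hκ : κ.Invariant μ) (hf : Integrable f μ) :
    ∫ x, ∫ y, f y ∂(κ x) ∂μ = ∫ x, f x ∂μ := by
  have comp_eq : (κ ∘ₖ Kernel.const Unit μ) () = μ := by
    rw [Kernel.comp_apply, Kernel.const_apply, hκ.def]
  have := Kernel.integral_comp (η := κ) (κ := Kernel.const Unit μ) (a := ()) (f := f)
    (by rwa [comp_eq])
  rwa [comp_eq, Kernel.const_apply, eq_comm] at this

theorem powMean_of_invariant [IsFiniteMeasure μ] {κ : Kernel E E} (hκ : κ.Invariant μ)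
    (hf : Measurable f) {C : ℝ} (hfC : ∀ x, f x ∈ Icc 0 C) (hn : n ≠ 0) :
    powMean μ n (fun x => powMean (κ x) n f) = powMean μ n f := by
  rw [powMean]
  simp only [powMean_pow (fun x => (hfC x).1) hn]
  rw [integral_of_invariant hκ (integrable_pow_of_mem_Icc hf hfC), powMean]

end PowerMeans

section VaradhanLemma

variable {E : Type*} [TopologicalSpace E] [T4Space E] {p : E → ℝ} {g : ℕ → E → ℝ} {G : E → ℝ}
  {C : ℝ≥0}

theorem iSup_mul_le_iSup_mul_add {X : Type*} {F F' u p : X → ℝ} {η : ℝ} (hp : ∀ x, 0 ≤ p x)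
    (hF : ∀ x, F x ≤ F' x + u x) (hu : ∀ x, u x * p x ≤ η) (hF' : ∀ x, 0 ≤ F' x)
    (hbdd : BddAbove (range fun x => F' x * p x)) (hη : 0 ≤ η) :
    ⨆ x, F x * p x ≤ (⨆ x, F' x * p x) + η := by
  have nonneg : 0 ≤ ⨆ x, F' x * p x := Real.iSup_nonneg fun x => mul_nonneg (hF' x) (hp x)
  refine Real.iSup_le (fun x => ?_) (add_nonneg nonneg hη)
  calc F x * p x ≤ (F' x + u x) * p x := mul_le_mul_of_nonneg_right (hF x) (hp x)
    _ = F' x * p x + u x * p x := add_mul _ _ _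
    _ ≤ _ := add_le_add (le_ciSup hbdd x) (hu x)

/-- Where `p` is not small the convergence is uniform by compactness, and elsewhere `C` is an
admissible error; the cutoff `u` interpolates between the two bounds. -/
theorem IsSubdeviability.exists_cutoff (hp : IsSubdeviability p)
    (hg : ∀ n x, g n x ∈ Icc 0 (C : ℝ)) (hG : ∀ x, G x ∈ Icc 0 (C : ℝ))
    (hgG : TendstoLocallyUniformly g G atTop) {η : ℝ} (hη : 0 < η) :
    ∃ u : C(E, ℝ), (∀ x, 0 ≤ u x) ∧ BddAbove (range u) ∧ (∀ x, u x * p x ≤ η) ∧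
      ∀ᶠ n in atTop, ∀ x, |g n x - G x| ≤ u x := by
  obtain ⟨γ, γ_pos, γ_le, hγ⟩ : ∃ γ : ℝ, 0 < γ ∧ γ ≤ 1 ∧ γ * (1 + C) ≤ η :=
    ⟨min 1 (η / (1 + C)), by positivity, min_le_left _ _,
      (mul_le_mul_of_nonneg_right (min_le_right _ _) (by positivity)).trans
        (div_mul_cancel₀ η (by positivity)).le⟩
  have K_compact := hp.isCompact γ ⟨γ_pos, γ_le⟩
  have near_K : ∀ᶠ q in atTop ×ˢ 𝓝ˢ {x | γ ≤ p x}, dist (G q.2) (g q.1 q.2) < γ :=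
    K_compact.mem_prod_nhdsSet_of_forall fun x _ =>
      tendstoLocallyUniformly_iff_forall_tendsto.1 hgG x (Metric.dist_mem_uniformity γ_pos)
  obtain ⟨N, hN, V, hV, hNV⟩ := eventually_prod_iff.1 near_K
  obtain ⟨U, U_open, hKU, hUV⟩ := mem_nhdsSet_iff_exists.1 hV
  obtain ⟨h, hh0, hh1, hh⟩ := exists_continuous_zero_one_of_isClosed K_compact.isClosed
    U_open.isClosed_compl (disjoint_compl_right_iff_subset.2 hKU)
  have u_le : ∀ x, γ + C * h x ≤ 1 + C := fun x =>
    add_le_add γ_le (mul_le_of_le_one_right C.2 (hh x).2)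
  refine ⟨⟨fun x => γ + C * h x, by fun_prop⟩, fun x => ?_, ⟨1 + C, forall_mem_range.2 u_le⟩,
    fun x => ?_, ?_⟩
  · exact add_nonneg γ_pos.le (mul_nonneg C.2 (hh x).1)
  · have px := hp.mem_Icc x
    rcases le_or_gt γ (p x) with hx | hx
    · calc (γ + C * h x) * p x = γ * p x := by rw [hh0 hx, Pi.zero_apply, mul_zero, add_zero]
        _ ≤ γ * (1 + C) := by gcongr; exact px.2.trans (le_add_of_nonneg_right C.2)
        _ ≤ η := hγ
    · calc (γ + C * h x) * p x ≤ (1 + C) * γ := mul_le_mul (u_le x) hx.le px.1 (by positivity)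
        _ ≤ η := by rwa [mul_comm]
  · filter_upwards [hN] with n hn x
    by_cases hx : x ∈ U
    · have close : dist (G x) (g n x) < γ := hNV hn (hUV hx)
      rw [dist_comm, Real.dist_eq] at close
      exact close.le.trans (le_add_of_nonneg_right (mul_nonneg C.2 (hh x).1))
    · have := abs_sub_le_of_nonneg_of_le (hg n x).1 (hg n x).2 (hG x).1 (hG x).2
      simpa only [ContinuousMap.coe_mk, hh1 hx, Pi.one_apply, mul_one] using
        this.trans (le_add_of_nonneg_left γ_pos.le)

theorem LDConv.eventually_lt_powMean {X : Type*} [TopologicalSpace X] [MeasurableSpace X]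
    {Q : ℕ → Measure X} {r : ℕ → ℕ} {p f : X → ℝ} {g : ℕ → X → ℝ} {b : ℝ} (hQ : LDConv Q r p)
    (hg : ∀ n, Integrable (fun x => g n x ^ r n) (Q n)) (hf : Continuous f)
    (hf0 : ∀ x, 0 ≤ f x) (hf' : BddAbove (range f)) (hfg : ∀ᶠ n in atTop, ∀ x, f x ≤ g n x)
    (hb : b < ⨆ x, f x * p x) : ∀ᶠ n in atTop, b < powMean (Q n) (r n) (g n) := by
  filter_upwards [hfg, (hQ f hf hf0 hf').eventually_const_lt hb] with n hn hbn
  exact hbn.trans_le (powMean_mono hf0 hn (hg n))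

theorem LDConv.eventually_powMean_lt {X : Type*} [TopologicalSpace X] [MeasurableSpace X]
    [OpensMeasurableSpace X] {Q : ℕ → Measure X} [∀ n, IsFiniteMeasure (Q n)] {r : ℕ → ℕ}
    {p f : X → ℝ} {g : ℕ → X → ℝ} {b : ℝ} (hQ : LDConv Q r p) (hg : ∀ n x, 0 ≤ g n x)
    (hf : Continuous f) (hf0 : ∀ x, 0 ≤ f x) (hf' : BddAbove (range f))
    (hgf : ∀ᶠ n in atTop, ∀ x, g n x ≤ f x) (hb : ⨆ x, f x * p x < b) :
    ∀ᶠ n in atTop, powMean (Q n) (r n) (g n) < b := by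
  obtain ⟨M, hM⟩ := hf'
  filter_upwards [hgf, (hQ f hf hf0 ⟨M, hM⟩).eventually_lt_const hb] with n hn hbn
  refine (powMean_mono (hg n) hn ?_).trans_lt hbn
  exact integrable_pow_of_mem_Icc hf.measurable fun x => ⟨hf0 x, hM ⟨x, rfl⟩⟩

/-- Varadhan's lemma with integrands that vary with `n`. -/
theorem LDConv.tendsto_powMean [MeasurableSpace E] [OpensMeasurableSpace E] {Q : ℕ → Measure E}
    [∀ n, IsFiniteMeasure (Q n)] {r : ℕ → ℕ} (hQ : LDConv Q r p) (hp : IsSubdeviability p)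
    (hg : ∀ n, Measurable (g n)) (hgC : ∀ n x, g n x ∈ Icc 0 (C : ℝ)) (hG : Continuous G)
    (hgG : TendstoLocallyUniformly g G atTop) :
    Tendsto (fun n => powMean (Q n) (r n) (g n)) atTop (𝓝 (⨆ x, G x * p x)) := by
  have G_mem : ∀ x, G x ∈ Icc 0 (C : ℝ) := fun x => isClosed_Icc.mem_of_tendsto
    ((tendstoLocallyUniformlyOn_univ.2 hgG).tendsto_at (mem_univ x))
    (Eventually.of_forall fun n => hgC n x)
  have p_nonneg : ∀ x, 0 ≤ p x := fun x => (hp.mem_Icc x).1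
  have bdd : ∀ f : E → ℝ, (∀ x, f x ∈ Icc 0 (C : ℝ)) → BddAbove (range fun x => f x * p x) :=
    fun f hf => ⟨C, forall_mem_range.2 fun x => (mul_le_of_le_one_right (hf x).1
      (hp.mem_Icc x).2).trans (hf x).2⟩
  refine tendsto_order.2 ⟨fun b hb => ?_, fun b hb => ?_⟩
  · obtain ⟨η, η_pos, hη⟩ := exists_between (sub_pos.2 hb)
    obtain ⟨u, u_nonneg, -, hup, hgu⟩ := hp.exists_cutoff hgC G_mem hgG η_pos
    let f : E → ℝ := fun x => max (G x - u x) 0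
    have f_mem : ∀ x, f x ∈ Icc 0 (C : ℝ) := fun x =>
      ⟨le_max_right _ _, max_le ((sub_le_self _ (u_nonneg x)).trans (G_mem x).2) C.2⟩
    have le_f : ⨆ x, G x * p x ≤ (⨆ x, f x * p x) + η :=
      iSup_mul_le_iSup_mul_add p_nonneg (fun x => sub_le_iff_le_add.1 (le_max_left _ _)) hup
        (fun x => (f_mem x).1) (bdd f f_mem) η_pos.le
    refine hQ.eventually_lt_powMean (fun n => integrable_pow_of_mem_Icc (hg n) (hgC n))
      (by fun_prop) (fun x => (f_mem x).1) ⟨C, forall_mem_range.2 fun x => (f_mem x).2⟩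
      (hgu.mono fun n hn x => ?_) (by linarith : b < ⨆ x, f x * p x)
    exact max_le (by linarith [(abs_le.1 (hn x)).1]) (hgC n x).1
  · obtain ⟨η, η_pos, hη⟩ := exists_between (sub_pos.2 hb)
    obtain ⟨u, u_nonneg, ⟨M, hM⟩, hup, hgu⟩ := hp.exists_cutoff hgC G_mem hgG η_pos
    have f_le : ⨆ x, (G x + u x) * p x ≤ (⨆ x, G x * p x) + η :=
      iSup_mul_le_iSup_mul_add p_nonneg (fun _ => le_rfl) hup (fun x => (G_mem x).1)
        (bdd G G_mem) η_pos.le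
    refine hQ.eventually_powMean_lt (fun n x => (hgC n x).1) (hG.add u.continuous)
      (fun x => add_nonneg (G_mem x).1 (u_nonneg x))
      ⟨C + M, forall_mem_range.2 fun x => add_le_add (G_mem x).2 (hM ⟨x, rfl⟩)⟩
      (hgu.mono fun n hn x => ?_) (f_le.trans_lt (lt_sub_iff_add_lt'.1 hη))
    exact sub_le_iff_le_add'.1 (le_of_abs_le (hn x))

end VaradhanLemma

section InvariantMeasures

open ProbabilityTheory

/-- Both sides are limits of `(∫ fⁿ dPⁿ)^(1/n) = (∫ ((∫ fⁿ dκⁿ(x, ·))^(1/n))ⁿ dPⁿ(x))^(1/n)`. -/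
theorem iSup_mul_eq_of_invariant {E : Type*} [TopologicalSpace E] [T4Space E]
    [FirstCountableTopology E] [MeasurableSpace E] [OpensMeasurableSpace E] {κ : ℕ → Kernel E E}
    [∀ n, IsMarkovKernel (κ n)] {P : ℕ → Measure E} [∀ n, IsFiniteMeasure (P n)]
    (hP : ∀ n, (κ n).Invariant (P n)) {T : E → E → ℝ}
    (hκ : ∀ x (xs : ℕ → E), Tendsto xs atTop (𝓝 x) →
      LDConv (fun n => κ n (xs n)) (fun n => n) (T x))
    {ρ : E → ℝ} (hρ : IsSubdeviability ρ) {φ : ℕ → ℕ} (hφ : Tendsto φ atTop atTop)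
    (hPρ : LDConv (fun k => P (φ k)) φ ρ) {f : C(E, ℝ)} (hf : ∀ x, f x ∈ Icc (0 : ℝ) 1) :
    ⨆ x, f x * ρ x = ⨆ x, (⨆ y, f y * T x y) * ρ x := by
  let g : ℕ → E → ℝ := fun n x => powMean (κ n x) n f
  have f_tendsto {Q : ℕ → Measure E} {r : ℕ → ℕ} {p : E → ℝ} (hQ : LDConv Q r p) :
      Tendsto (fun n => powMean (Q n) (r n) f) atTop (𝓝 (⨆ x, f x * p x)) :=
    hQ f f.continuous (fun x => (hf x).1) ⟨1, forall_mem_range.2 fun x => (hf x).2⟩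
  have g_tendsto : ∀ x (xs : ℕ → E), Tendsto xs atTop (𝓝 x) →
      Tendsto (fun n => g n (xs n)) atTop (𝓝 (⨆ y, f y * T x y)) :=
    fun x xs hxs => f_tendsto (hκ x xs hxs)
  have gφ_tendsto : TendstoLocallyUniformly (fun k => g (φ k)) (fun x => ⨆ y, f y * T x y) atTop :=
    fun u hu x =>
      let ⟨t, ht, hgt⟩ := tendstoLocallyUniformly_of_forall_seq_tendsto g_tendsto u hu x
      ⟨t, ht, hφ.eventually hgt⟩
  have mean_g_tendsto : Tendsto (fun k => powMean (P (φ k)) (φ k) (g (φ k))) atTop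
      (𝓝 (⨆ x, (⨆ y, f y * T x y) * ρ x)) :=
    hPρ.tendsto_powMean (C := 1) hρ (fun k => measurable_powMean_kernel f.continuous.measurable)
      (fun k x => powMean_mem_Icc hf) (continuous_of_forall_seq_tendsto g_tendsto) gφ_tendsto
  have mean_g_eq : ∀ᶠ k in atTop,
      powMean (P (φ k)) (φ k) (g (φ k)) = powMean (P (φ k)) (φ k) f :=
    (hφ.eventually_ne_atTop 0).mono fun k hk =>
      powMean_of_invariant (hP (φ k)) f.continuous.measurable hf hk
  exact tendsto_nhds_unique (f_tendsto hPρ) (mean_g_tendsto.congr' mean_g_eq)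

end InvariantMeasures

section MaxitiveMarkov

/-- A family of path densities with values in `[0, 1]` and the maxitive Markov property (2.3). -/
structure IsMaxitiveMarkov {E : Type*} [MetricSpace E] (Px : E → C(ℝ≥0, E) → ℝ) : Prop where
  mem_Icc : ∀ x X, Px x X ∈ Icc (0 : ℝ) 1
  start : ∀ x (X : C(ℝ≥0, E)), X 0 ≠ x → Px x X = 0
  markov : ∀ x (X : C(ℝ≥0, E)) (s : ℝ≥0),
    Px x X = (⨆ X' ∈ {X' : C(ℝ≥0, E) | ∀ u ≤ s, X' u = X u}, Px x X') * Px (X s) (pshift s X)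

/-- A maxitive Markov family that depends upper semicontinuously on its starting point, the
regularity assumption (2.2). -/
structure IsFellerMaxitiveMarkov {E : Type*} [MetricSpace E] (Px : E → C(ℝ≥0, E) → ℝ) : Prop
    extends IsMaxitiveMarkov Px where
  upperSemicontinuous : UpperSemicontinuous fun q : E × C(ℝ≥0, E) => Px q.1 q.2
  isCompact_biUnion : ∀ K : Set E, IsCompact K → ∀ γ ∈ Ioc (0 : ℝ) 1,
    IsCompact (⋃ x ∈ K, {X : C(ℝ≥0, E) | γ ≤ Px x X})

variable {E : Type*} [MetricSpace E] {Px : E → C(ℝ≥0, E) → ℝ} {x y z : E} {s t : ℝ≥0}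

theorem exists_concat {X Y : C(ℝ≥0, E)} (h : X s = Y 0) :
    ∃ Z : C(ℝ≥0, E), (∀ u ≤ s, Z u = X u) ∧ pshift s Z = Y := by
  refine ⟨⟨fun u => if u ≤ s then X u else Y (u - s), ?_⟩, fun u hu => if_pos hu, ?_⟩
  · refine Continuous.if_le X.continuous (by fun_prop) continuous_id continuous_const ?_
    rintro u rfl
    rwa [tsub_self]
  · ext t
    by_cases ht : t = 0
    · simp [pshift, ht, h]
    · simp [pshift, ht]

namespace IsMaxitiveMarkov

variable (hPx : IsMaxitiveMarkov Px)
include hPx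

theorem eq_start_of_pos {X : C(ℝ≥0, E)} (h : 0 < Px x X) : X 0 = x := by
  by_contra hne
  exact h.ne' (hPx.start x X hne)

theorem transDen_nonneg : 0 ≤ transDen Px x t y :=
  biSup_nonneg fun X _ => (hPx.mem_Icc x X).1

theorem transDen_le_one : transDen Px x t y ≤ 1 :=
  biSup_le_of_nonneg zero_le_one fun X _ => (hPx.mem_Icc x X).2

theorem le_transDen {X : C(ℝ≥0, E)} (hX : X t = y) : Px x X ≤ transDen Px x t y :=
  le_biSup_of_forall_le (fun X _ => (hPx.mem_Icc x X).2) hX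

theorem le_transDen_mul (X : C(ℝ≥0, E)) (s : ℝ≥0) :
    Px x X ≤ transDen Px x s (X s) * Px (X s) (pshift s X) := by
  rw [hPx.markov x X s]
  refine mul_le_mul_of_nonneg_right ?_ (hPx.mem_Icc _ _).1
  exact biSup_le_of_nonneg hPx.transDen_nonneg fun X' hX' => hPx.le_transDen (hX' s le_rfl)

theorem mul_le_transDen_add {X Y : C(ℝ≥0, E)} (hX : X s = z) (hY : Y t = y) :
    Px x X * Px z Y ≤ transDen Px x (s + t) y := by
  by_cases hz : Y 0 = z
  · obtain ⟨Z, hZX, rfl⟩ := exists_concat (hX.trans hz.symm)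
    have hZs : Z s = z := (hZX s le_rfl).trans hX
    calc Px x X * Px z (pshift s Z)
        ≤ (⨆ X' ∈ {X' : C(ℝ≥0, E) | ∀ u ≤ s, X' u = Z u}, Px x X') * Px z (pshift s Z) :=
          mul_le_mul_of_nonneg_right (le_biSup_of_forall_le (fun X _ => (hPx.mem_Icc x X).2)
            fun u hu => (hZX u hu).symm) (hPx.mem_Icc _ _).1
      _ = Px x Z := by rw [hPx.markov x Z s, hZs]
      _ ≤ transDen Px x (s + t) y := hPx.le_transDen hY
  · rw [hPx.start z Y hz, mul_zero]
    exact hPx.transDen_nonneg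

theorem transDen_mul_transDen_le :
    transDen Px x s z * transDen Px z t y ≤ transDen Px x (s + t) y := by
  refine mul_biSup_le_of_nonneg hPx.transDen_nonneg hPx.transDen_nonneg fun Y hY => ?_
  rw [mul_comm]
  refine mul_biSup_le_of_nonneg (hPx.mem_Icc z Y).1 hPx.transDen_nonneg fun X hX => ?_
  rw [mul_comm]
  exact hPx.mul_le_transDen_add hX hY

theorem monotone_transDen (hx : Px x (ContinuousMap.const ℝ≥0 x) = 1) (y : E) :
    Monotone fun t => transDen Px x t y := by
  intro t u htu
  have stay : 1 ≤ transDen Px x (u - t) x := hx.symm.le.trans (hPx.le_transDen rfl)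
  calc transDen Px x t y ≤ transDen Px x (u - t) x * transDen Px x t y :=
        le_mul_of_one_le_left hPx.transDen_nonneg stay
    _ ≤ transDen Px x (u - t + t) y := hPx.transDen_mul_transDen_le
    _ = transDen Px x u y := by rw [tsub_add_cancel_of_le htu]

/-- A path of density above `c ^ N` cannot spend a factor `c` on each of `N` time intervals of
length `T`. -/
theorem exists_segment {c : ℝ} (hc : 0 ≤ c) (T : ℝ≥0) (N : ℕ) :
    ∀ {x : E} {X : C(ℝ≥0, E)}, c ^ N < Px x X →
      ∃ j < N, ∃ Z : C(ℝ≥0, E), c < Px (X (j * T)) Z ∧ ∀ u ≤ T, Z u = X (j * T + u) := by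
  induction N with
  | zero => exact fun {x X} h => absurd (hPx.mem_Icc x X).2 (by simpa using h)
  | succ N ih =>
    intro x X hX
    rcases lt_or_ge c (⨆ X' ∈ {X' : C(ℝ≥0, E) | ∀ u ≤ T, X' u = X u}, Px x X') with h | h
    · obtain ⟨Z, hZX, hZ⟩ := exists_mem_lt_of_lt_biSup hc h
      have hX0 : X 0 = x := hPx.eq_start_of_pos ((pow_nonneg hc _).trans_lt hX)
      exact ⟨0, N.succ_pos, Z, by simpa [hX0] using hZ, fun u hu => by simpa using hZX u hu⟩
    · have later : c ^ N < Px (X T) (pshift T X) := by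
        rw [hPx.markov x X T, pow_succ'] at hX
        exact lt_of_mul_lt_mul_left
          (hX.trans_le (mul_le_mul_of_nonneg_right h (hPx.mem_Icc _ _).1)) hc
      obtain ⟨j, hj, Z, hZ, hZX⟩ := ih later
      have shift (u : ℝ≥0) : pshift T X (j * T + u) = X ((j + 1 : ℕ) * T + u) := by
        simp only [pshift, ContinuousMap.coe_mk, Nat.cast_succ]
        ring_nf
      refine ⟨j + 1, Nat.succ_lt_succ hj, Z, ?_, fun u hu => (hZX u hu).trans (shift u)⟩
      have start := shift 0
      rw [add_zero, add_zero] at start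
      rwa [← start]

end IsMaxitiveMarkov

theorem IsFellerMaxitiveMarkov.exists_uniform_hitting (hPx : IsFellerMaxitiveMarkov Px)
    {K U : Set E} (hK : IsCompact K) (hU : IsOpen U)
    (hit : ∀ x ∈ K, ∀ X, Px x X = 1 → ∃ t, X t ∈ U) :
    ∃ c : ℝ, 0 ≤ c ∧ c < 1 ∧ ∃ T : ℝ≥0, ∀ x ∈ K, ∀ X, c < Px x X → ∃ t ≤ T, X t ∈ U := by
  by_contra! h
  obtain ⟨c, c_mono, c_mem, c_tendsto⟩ := exists_seq_strictMono_tendsto' (zero_lt_one' ℝ)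
  let avoiding (n : ℕ) : Set C(ℝ≥0, E) := {X | ∀ t ≤ (n : ℝ≥0), X t ∈ Uᶜ}
  have avoiding_closed (n : ℕ) : IsClosed (avoiding n) := by
    simp only [avoiding, ofPred_forall]
    exact isClosed_biInter fun t _ => hU.isClosed_compl.preimage (continuous_eval_const t)
  let C (n : ℕ) : Set C(ℝ≥0, E) := (⋃ x ∈ K, {X | c n ≤ Px x X}) ∩ avoiding n
  have C_compact (n : ℕ) : IsCompact (C n) :=
    (hPx.isCompact_biUnion K hK (c n) ⟨(c_mem n).1, (c_mem n).2.le⟩).inter_right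
      (avoiding_closed n)
  obtain ⟨X, hX⟩ : (⋂ n, C n).Nonempty := by
    refine IsCompact.nonempty_iInter_of_sequence_nonempty_isCompact_isClosed C (fun n => ?_)
      (fun n => ?_) (C_compact 0) fun n => (C_compact n).isClosed
    · refine inter_subset_inter (iUnion₂_mono fun x _ X hX => ?_) fun X hX t ht => ?_
      · exact (c_mono.monotone n.le_succ).trans hX
      · exact hX t (ht.trans (Nat.cast_le.2 n.le_succ))
    · obtain ⟨x, hxK, X, hX, hXU⟩ := h (c n) (c_mem n).1.le (c_mem n).2 n
      exact ⟨X, mem_biUnion hxK hX.le, hXU⟩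
  have X_mem (n : ℕ) : X 0 ∈ K ∧ c n ≤ Px (X 0) X := by
    obtain ⟨x, hxK, hx⟩ := mem_iUnion₂.1 (mem_iInter.1 hX n).1
    rw [hPx.eq_start_of_pos ((c_mem n).1.trans_le hx)]
    exact ⟨hxK, hx⟩
  have X_free : Px (X 0) X = 1 :=
    le_antisymm (hPx.mem_Icc _ _).2 (le_of_tendsto' c_tendsto fun n => (X_mem n).2)
  obtain ⟨t, ht⟩ := hit (X 0) (X_mem 0).1 X X_free
  obtain ⟨n, hn⟩ := exists_nat_ge t
  exact (mem_iInter.1 hX n).2 t hn ht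

end MaxitiveMarkov

section StationaryPaths

variable {E : Type*} [MetricSpace E] {Px : E → C(ℝ≥0, E) → ℝ} {ρ : E → ℝ}

/-- The path density of the maxitive Markov process started from `ρ`. -/
def stationaryDen (Px : E → C(ℝ≥0, E) → ℝ) (ρ : E → ℝ) (X : C(ℝ≥0, E)) : ℝ :=
  ρ (X 0) * Px (X 0) X

/-- `ρ` is invariant for the maxitive dynamics of `Px`: at every time `t` the path density started
from `ρ` has marginal `ρ`. -/
def IsMaxitiveInvariant (Px : E → C(ℝ≥0, E) → ℝ) (ρ : E → ℝ) : Prop :=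
  ∀ (t : ℝ≥0) (y : E), IsLUB (stationaryDen Px ρ '' {X | X t = y}) (ρ y)

theorem IsMaxitiveMarkov.stationaryDen_mem_Icc (hPx : IsMaxitiveMarkov Px)
    (hρ : ∀ x, ρ x ∈ Icc (0 : ℝ) 1) (X : C(ℝ≥0, E)) : stationaryDen Px ρ X ∈ Icc (0 : ℝ) 1 :=
  ⟨mul_nonneg (hρ _).1 (hPx.mem_Icc _ X).1,
    mul_le_one₀ (hρ _).2 (hPx.mem_Icc _ X).1 (hPx.mem_Icc _ X).2⟩

theorem IsFellerMaxitiveMarkov.isSubdeviability_stationaryDen (hPx : IsFellerMaxitiveMarkov Px)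
    (hρ : IsSubdeviability ρ) : IsSubdeviability (stationaryDen Px ρ) where
  mem_Icc := hPx.stationaryDen_mem_Icc hρ.mem_Icc
  isCompact γ hγ := by
    have eval_cont : Continuous fun X : C(ℝ≥0, E) => X 0 := continuous_eval_const 0
    have usc : UpperSemicontinuous (stationaryDen Px ρ) :=
      upperSemicontinuous_mul_of_nonneg (hρ.upperSemicontinuous.comp eval_cont)
        (hPx.upperSemicontinuous.comp (eval_cont.prodMk continuous_id))
        (fun X => (hρ.mem_Icc _).1) fun X => (hPx.mem_Icc _ X).1
    refine (hPx.isCompact_biUnion _ (hρ.isCompact γ hγ) γ hγ).of_isClosed_subset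
      (usc.isClosed_preimage γ) fun X hX => mem_iUnion₂.2 ⟨X 0, ?_, ?_⟩
    · exact hX.trans (mul_le_of_le_one_right (hρ.mem_Icc _).1 (hPx.mem_Icc _ X).2)
    · exact hX.trans (mul_le_of_le_one_left (hPx.mem_Icc _ X).1 (hρ.mem_Icc _).2)

theorem IsMaxitiveMarkov.iSup_transDen_mul_eq (hPx : IsMaxitiveMarkov Px)
    (hρ : ∀ x, ρ x ∈ Icc (0 : ℝ) 1) {f : E → ℝ} (hf : ∀ x, f x ∈ Icc (0 : ℝ) 1) (t : ℝ≥0) :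
    ⨆ x, (⨆ y, f y * transDen Px x t y) * ρ x = ⨆ X, f (X t) * stationaryDen Px ρ X := by
  have T_mem (x y : E) : transDen Px x t y ∈ Icc (0 : ℝ) 1 :=
    ⟨hPx.transDen_nonneg, hPx.transDen_le_one⟩
  have fT_mem (x : E) : ⨆ y, f y * transDen Px x t y ∈ Icc (0 : ℝ) 1 :=
    ⟨Real.iSup_nonneg fun y => mul_nonneg (hf y).1 (T_mem x y).1, Real.iSup_le
      (fun y => mul_le_one₀ (hf y).2 (T_mem x y).1 (T_mem x y).2) zero_le_one⟩
  have den_mem := hPx.stationaryDen_mem_Icc hρ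
  have nonneg : 0 ≤ ⨆ X, f (X t) * stationaryDen Px ρ X :=
    Real.iSup_nonneg fun X => mul_nonneg (hf _).1 (den_mem X).1
  refine le_antisymm (Real.iSup_le (fun x => ?_) nonneg) (Real.iSup_le (fun X => ?_) ?_)
  · rw [mul_comm, Real.mul_iSup_of_nonneg (hρ x).1]
    refine Real.iSup_le (fun y => ?_) nonneg
    rw [← mul_assoc]
    refine mul_biSup_le_of_nonneg (mul_nonneg (hρ x).1 (hf y).1) nonneg ?_
    rintro X rfl
    by_cases hx : X 0 = x
    · calc ρ x * f (X t) * Px x X = f (X t) * stationaryDen Px ρ X := by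
            rw [stationaryDen, hx, mul_comm (ρ x), mul_assoc]
        _ ≤ _ := le_ciSup (bddAbove_range_mul_of_mem_Icc (fun X => hf (X t)) den_mem) X
    · rwa [hPx.start x X hx, mul_zero]
  · calc f (X t) * stationaryDen Px ρ X = f (X t) * Px (X 0) X * ρ (X 0) := by
          rw [stationaryDen, mul_comm (ρ _), mul_assoc]
      _ ≤ f (X t) * transDen Px (X 0) t (X t) * ρ (X 0) := by
          gcongr
          · exact (hρ _).1
          · exact (hf _).1
          · exact hPx.le_transDen rfl
      _ ≤ (⨆ y, f y * transDen Px (X 0) t y) * ρ (X 0) := mul_le_mul_of_nonneg_right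
          (le_ciSup (bddAbove_range_mul_of_mem_Icc hf (T_mem (X 0))) (X t)) (hρ _).1
      _ ≤ _ := le_ciSup (bddAbove_range_mul_of_mem_Icc fT_mem hρ) (X 0)
  · exact Real.iSup_nonneg fun x => mul_nonneg (fT_mem x).1 (hρ x).1

open ProbabilityTheory in
theorem IsFellerMaxitiveMarkov.isMaxitiveInvariant_of_ldConv [MeasurableSpace E]
    [OpensMeasurableSpace E] (hPx : IsFellerMaxitiveMarkov Px) {κ : ℕ → ℝ≥0 → Kernel E E}
    [∀ n t, IsMarkovKernel (κ n t)] {P : ℕ → Measure E} [∀ n, IsFiniteMeasure (P n)]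
    (hP : ∀ n t, (κ n t).Invariant (P n))
    (hκ : ∀ t x (xs : ℕ → E), Tendsto xs atTop (𝓝 x) →
      LDConv (fun n => κ n t (xs n)) (fun n => n) (transDen Px x t))
    (hρ : IsSubdeviability ρ) {φ : ℕ → ℕ} (hφ : Tendsto φ atTop atTop)
    (hPρ : LDConv (fun k => P (φ k)) φ ρ) : IsMaxitiveInvariant Px ρ := by
  intro t
  refine hρ.isLUB_image_preimage (hPx.isSubdeviability_stationaryDen hρ)
    (continuous_eval_const t) (fun y => ⟨ContinuousMap.const ℝ≥0 y, rfl⟩) fun f hf => ?_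
  rw [← hPx.iSup_transDen_mul_eq hρ.mem_Icc hf]
  exact iSup_mul_eq_of_invariant (fun n => hP n t) (hκ t) hρ hφ hPρ hf

namespace IsMaxitiveInvariant

variable (hI : IsMaxitiveInvariant Px ρ) (hPx : IsMaxitiveMarkov Px)
  (hρ : ∀ x, ρ x ∈ Icc (0 : ℝ) 1)
include hI hPx hρ

theorem mul_transDen_le (x : E) (t : ℝ≥0) (y : E) : ρ x * transDen Px x t y ≤ ρ y := by
  refine mul_biSup_le_of_nonneg (hρ x).1 (hρ y).1 fun X hX => ?_
  by_cases hx : X 0 = x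
  · exact (hI t y).1 ⟨X, hX, by rw [stationaryDen, hx]⟩
  · rw [hPx.start x X hx, mul_zero]
    exact (hρ y).1

theorem stationaryDen_le_pshift (X : C(ℝ≥0, E)) (s : ℝ≥0) :
    stationaryDen Px ρ X ≤ ρ (X s) * Px (X s) (pshift s X) :=
  calc ρ (X 0) * Px (X 0) X
      ≤ ρ (X 0) * (transDen Px (X 0) s (X s) * Px (X s) (pshift s X)) :=
        mul_le_mul_of_nonneg_left (hPx.le_transDen_mul X s) (hρ _).1
    _ = ρ (X 0) * transDen Px (X 0) s (X s) * Px (X s) (pshift s X) := (mul_assoc _ _ _).symm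
    _ ≤ ρ (X s) * Px (X s) (pshift s X) :=
        mul_le_mul_of_nonneg_right (hI.mul_transDen_le hPx hρ _ _ _) (hPx.mem_Icc _ _).1

end IsMaxitiveInvariant

end StationaryPaths

section AttractingSet

variable {E : Type*} [MetricSpace E] {Px : E → C(ℝ≥0, E) → ℝ} {A : Set E} {ρ : E → ℝ}

/-- A set of equilibria that every path of full deviability approaches, and near which one can
move to and from an equilibrium at arbitrarily small cost: assumptions (2.4)(i), (ii), (iv). -/
structure IsAttractingSet (Px : E → C(ℝ≥0, E) → ℝ) (A : Set E) : Prop where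
  attract : ∀ x (X : C(ℝ≥0, E)), Px x X = 1 → ⨅ t, infDist (X t) A = 0
  equil : ∀ a ∈ A, Px a (ContinuousMap.const ℝ≥0 a) = 1
  near : ∀ ε > 0, ∃ δ > 0, ∀ x, infDist x A < δ → ∃ s₀ s₁, ∃ a ∈ A,
    1 - ε < transDen Px x s₀ a ∧ 1 - ε < transDen Px a s₁ x

theorem IsMaxitiveInvariant.exists_le_mul_transDen_of_hitting (hI : IsMaxitiveInvariant Px ρ)
    (hPx : IsFellerMaxitiveMarkov Px) (hρ : IsSubdeviability ρ) {U : Set E} (hU : IsOpen U)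
    (hit : ∀ x X, Px x X = 1 → ∃ t, X t ∈ U) {y : E} {c : ℝ} (c_pos : 0 < c) (hc : c < ρ y) :
    ∃ z ∈ U, ∃ t, c ≤ ρ z * transDen Px z t y := by
  have K_compact := hρ.isCompact c ⟨c_pos, hc.le.trans (hρ.mem_Icc y).2⟩
  obtain ⟨q, q_nonneg, q_lt_one, T, hT⟩ :=
    hPx.exists_uniform_hitting K_compact hU fun x _ => hit x
  obtain ⟨N, hN⟩ := exists_pow_lt_of_lt_one c_pos q_lt_one
  obtain ⟨_, ⟨X, hXy, rfl⟩, hX⟩ := (lt_isLUB_iff (hI (N * T) y)).1 hc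
  have hX_shift (s : ℝ≥0) : c < ρ (X s) * Px (X s) (pshift s X) :=
    hX.trans_le (hI.stationaryDen_le_pshift hPx.toIsMaxitiveMarkov hρ.mem_Icc X s)
  have X_mem (s : ℝ≥0) : c ≤ ρ (X s) := (hX_shift s).le.trans
    (mul_le_of_le_one_right (hρ.mem_Icc _).1 (hPx.mem_Icc _ _).2)
  have hX_den : q ^ N < Px (X 0) X := (hN.trans hX).trans_le
    (mul_le_of_le_one_left (hPx.mem_Icc _ _).1 (hρ.mem_Icc _).2)
  obtain ⟨j, hj, Z, hZ, hZX⟩ := hPx.exists_segment q_nonneg T N hX_den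
  obtain ⟨τ, hτ, hτU⟩ := hT _ (X_mem _) Z hZ
  rw [hZX τ hτ] at hτU
  have time_le : j * T + τ ≤ N * T :=
    calc j * T + τ ≤ (j + 1 : ℕ) * T := by rw [Nat.cast_succ, add_one_mul]; gcongr
      _ ≤ N * T := by gcongr; exact hj
  refine ⟨X (j * T + τ), hτU, N * T - (j * T + τ), (hX_shift (j * T + τ)).le.trans ?_⟩
  refine mul_le_mul_of_nonneg_left (hPx.le_transDen ?_) (hρ.mem_Icc _).1
  exact (congrArg X (add_tsub_cancel_of_le time_le)).trans hXy

namespace IsAttractingSet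

variable (hA : IsAttractingSet Px A) (hPx : IsFellerMaxitiveMarkov Px) (hρ : IsSubdeviability ρ)
  (hI : IsMaxitiveInvariant Px ρ)
include hA hPx hρ hI

theorem exists_le_mul_transDen {y : E} {c ε : ℝ} (c_pos : 0 < c) (hc : c < ρ y) (hε : 0 < ε)
    (hε1 : ε ≤ 1) : ∃ a ∈ A, ∃ t, (1 - ε) * (1 - ε) * c ≤ ρ a * transDen Px a t y := by
  obtain ⟨δ, δ_pos, hδ⟩ := hA.near ε hε
  have hit (x : E) (X : C(ℝ≥0, E)) (hX : Px x X = 1) : ∃ t, X t ∈ {x | infDist x A < δ} :=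
    exists_lt_of_ciInf_lt ((hA.attract x X hX).trans_lt δ_pos)
  obtain ⟨z, hz, t, hct⟩ := hI.exists_le_mul_transDen_of_hitting hPx hρ
    (isOpen_lt (continuous_infDist_pt A) continuous_const) hit c_pos hc
  obtain ⟨s₀, s₁, a, ha, hza, haz⟩ := hδ z hz
  have ε_le : 0 ≤ 1 - ε := sub_nonneg.2 hε1
  have to_A : (1 - ε) * ρ z ≤ ρ a :=
    calc (1 - ε) * ρ z ≤ transDen Px z s₀ a * ρ z :=
          mul_le_mul_of_nonneg_right hza.le (hρ.mem_Icc z).1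
      _ = ρ z * transDen Px z s₀ a := mul_comm _ _
      _ ≤ ρ a := hI.mul_transDen_le hPx.toIsMaxitiveMarkov hρ.mem_Icc z s₀ a
  have from_A : (1 - ε) * transDen Px z t y ≤ transDen Px a (s₁ + t) y :=
    (mul_le_mul_of_nonneg_right haz.le hPx.transDen_nonneg).trans hPx.transDen_mul_transDen_le
  refine ⟨a, ha, s₁ + t, ?_⟩
  calc (1 - ε) * (1 - ε) * c
      ≤ (1 - ε) * (1 - ε) * (ρ z * transDen Px z t y) :=
        mul_le_mul_of_nonneg_left hct (mul_nonneg ε_le ε_le)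
    _ = (1 - ε) * ρ z * ((1 - ε) * transDen Px z t y) := mul_mul_mul_comm _ _ _ _
    _ ≤ ρ a * transDen Px a (s₁ + t) y :=
        mul_le_mul to_A from_A (mul_nonneg ε_le hPx.transDen_nonneg) (hρ.mem_Icc a).1

variable {PL : E → E → ℝ}
  (hPL : ∀ a ∈ A, ∀ y, Tendsto (fun t => transDen Px a t y) atTop (𝓝 (PL a y)))
include hPL

theorem eq_biSup_mul (y : E) : ρ y = ⨆ a ∈ A, ρ a * PL a y := by
  have flux_le : ∀ a ∈ A, ρ a * PL a y ≤ ρ y := fun a ha =>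
    le_of_tendsto' ((hPL a ha y).const_mul (ρ a)) fun t =>
      hI.mul_transDen_le hPx.toIsMaxitiveMarkov hρ.mem_Icc a t y
  have PL_ge : ∀ a ∈ A, ∀ t, transDen Px a t y ≤ PL a y := fun a ha =>
    (hPx.monotone_transDen (hA.equil a ha) y).ge_of_tendsto (hPL a ha y)
  have sup_nonneg : 0 ≤ ⨆ a ∈ A, ρ a * PL a y := biSup_nonneg fun a ha =>
    mul_nonneg (hρ.mem_Icc a).1 (hPx.transDen_nonneg.trans (PL_ge a ha 0))
  refine le_antisymm (le_of_forall_lt_imp_le_of_dense fun c hc => ?_)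
    (biSup_le_of_nonneg (hρ.mem_Icc y).1 flux_le)
  rcases le_or_gt c 0 with c_nonpos | c_pos
  · exact c_nonpos.trans sup_nonneg
  have approx : ∀ᶠ ε in 𝓝[>] (0 : ℝ), (1 - ε) * (1 - ε) * c ≤ ⨆ a ∈ A, ρ a * PL a y := by
    filter_upwards [Ioc_mem_nhdsGT zero_lt_one] with ε hε
    obtain ⟨a, ha, t, h⟩ := hA.exists_le_mul_transDen hPx hρ hI c_pos hc hε.1 hε.2
    exact (h.trans (mul_le_mul_of_nonneg_left (PL_ge a ha t) (hρ.mem_Icc a).1)).trans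
      (le_biSup_of_forall_le flux_le ha)
  have limit : Tendsto (fun ε : ℝ => (1 - ε) * (1 - ε) * c) (𝓝[>] 0) (𝓝 c) :=
    tendsto_nhdsWithin_of_tendsto_nhds (Continuous.tendsto' (by fun_prop) 0 c (by ring))
  exact le_of_tendsto limit approx

theorem biSup_eq_iSup : ⨆ a ∈ A, ρ a = ⨆ x, ρ x := by
  have bdd : BddAbove (range ρ) := ⟨1, forall_mem_range.2 fun x => (hρ.mem_Icc x).2⟩
  have nonneg : 0 ≤ ⨆ a ∈ A, ρ a := biSup_nonneg fun a _ => (hρ.mem_Icc a).1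
  refine le_antisymm (biSup_le_of_nonneg (Real.iSup_nonneg fun x => (hρ.mem_Icc x).1)
    fun a _ => le_ciSup bdd a) (Real.iSup_le (fun x => ?_) nonneg)
  rw [hA.eq_biSup_mul hPx hρ hI hPL x]
  refine biSup_le_of_nonneg nonneg fun a ha => ?_
  calc ρ a * PL a x ≤ ρ a := mul_le_of_le_one_right (hρ.mem_Icc a).1
        (le_of_tendsto' (hPL a ha x) fun t => hPx.transDen_le_one)
    _ ≤ ⨆ a ∈ A, ρ a := le_biSup_of_forall_le (fun a _ => (hρ.mem_Icc a).2) ha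

end IsAttractingSet

theorem DevSetup.isFellerMaxitiveMarkov (h : DevSetup E Px A) : IsFellerMaxitiveMarkov Px where
  mem_Icc x := (h.dev x).1
  start := h.start
  markov := h.markov
  upperSemicontinuous := h.usc
  isCompact_biUnion := h.cpt

theorem DevSetup.isAttractingSet (h : DevSetup E Px A) : IsAttractingSet Px A where
  attract := h.attract
  equil := h.equil
  near ε hε :=
    let ⟨δ, δ_pos, hδ⟩ := h.nearA ε hε
    ⟨δ, δ_pos, fun x hx => let ⟨s₀, s₁, _, _, a⟩ := hδ x hx; ⟨s₀, s₁, a⟩⟩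

theorem stmt9_general [MeasurableSpace E] [OpensMeasurableSpace E]
    (hPx : IsFellerMaxitiveMarkov Px) (hA : IsAttractingSet Px A) {PL : E → E → ℝ}
    (hPL : ∀ a ∈ A, ∀ y, Tendsto (fun t => transDen Px a t y) atTop (𝓝 (PL a y)))
    {κ : ℕ → ℝ≥0 → ProbabilityTheory.Kernel E E}
    [∀ n t, ProbabilityTheory.IsMarkovKernel (κ n t)] {P : ℕ → Measure E}
    [∀ n, IsFiniteMeasure (P n)] (hP : ∀ n t, (κ n t).Invariant (P n))
    (hκ : ∀ t x (xs : ℕ → E), Tendsto xs atTop (𝓝 x) →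
      LDConv (fun n => κ n t (xs n)) (fun n => n) (transDen Px x t))
    (hρ : IsDeviabilityDensity ρ) {φ : ℕ → ℕ} (hφ : Tendsto φ atTop atTop)
    (hPρ : LDConv (fun k => P (φ k)) φ ρ) :
    (∀ x, ρ x = ⨆ a ∈ A, ρ a * PL a x) ∧ ⨆ a ∈ A, ρ a = 1 := by
  have hI : IsMaxitiveInvariant Px ρ :=
    hPx.isMaxitiveInvariant_of_ldConv hP hκ hρ.isSubdeviability hφ hPρ
  exact ⟨hA.eq_biSup_mul hPx hρ.isSubdeviability hI hPL,
    (hA.biSup_eq_iSup hPx hρ.isSubdeviability hI hPL).trans hρ.2.1⟩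

end AttractingSet

theorem stmt9
    (Px : S → C(ℝ≥0, S) → ℝ) (A : Set S) (hyp : DevSetup S Px A)
    (PL : S → S → ℝ)
    (hPL : ∀ x y : S, Tendsto (fun t : ℝ≥0 => transDen Px x t y) atTop (𝓝 (PL x y)))
    (κ : ℕ → ℝ≥0 → ProbabilityTheory.Kernel S S)
    (hκ : ∀ n t, ProbabilityTheory.IsMarkovKernel (κ n t))
    (P : ℕ → Measure S) (hP : ∀ n, IsProbabilityMeasure (P n))
    (hinv : ∀ n (t : ℝ≥0) (Γ : Set S), MeasurableSet Γ →
      P n Γ = ∫⁻ x, κ n t x Γ ∂(P n))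
    (hκLD : ∀ (t : ℝ≥0) (x : S) (xs : ℕ → S), Tendsto xs atTop (𝓝 x) →
      LDConv (fun n => κ n t (xs n)) (fun n => n) (fun y => transDen Px x t y))
    (ρ : S → ℝ) (hρdev : IsDeviabilityDensity ρ)
    (φ : ℕ → ℕ) (hφ : StrictMono φ)
    (hρ : LDConv (fun k => P (φ k)) φ ρ) :
    (∀ x : S, ρ x = ⨆ a ∈ A, ρ a * PL a x) ∧ (⨆ a ∈ A, ρ a) = 1 := by
  exact stmt9_general hyp.isFellerMaxitiveMarkov hyp.isAttractingSet (fun a _ => hPL a)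
    (fun n t => invariant_of_forall_eq_lintegral (hinv n t)) hκLD hρdev hφ.tendsto_atTop hρ
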